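/- Fix d, p, n ≥ 1 and let M_p = {α ∈ ℕ^d : |α| ≤ p} be the set of monomial multi-indices of degree at most p. For every sequence of step sizes η^(1), η^(2), … ∈ ℝ there exist an integer L ≤ p·C(d+p−2, p−1), subsets b_1, …, b_L ⊆ M_p with ⋃_ℓ b_ℓ = M_p and |b_ℓ| ≤ 2d+1 for every ℓ, and weights of a 2L-layer bilinear Transformer with embedding dimension D = 2d+1, such that for all x_1, …, x_{n+1} ∈ ℝ^d and y_1, …, y_n ∈ ℝ (prompt with i-th column ((1, x_i, 0_d), y_i) for i ≤ n and last column ((1, x_{n+1}, 0_d), 0)) and every ℓ ∈ {1, …, L}: Z^(2ℓ)[2d+2, n+1] = f(x_{n+1}; w^(ℓ)), where (w^(ℓ)) are the iterates of block-coordinate descent for degree-p polynomial regression with blocks b_ℓ, step sizes η^(ℓ), and initialization w^(0) = 0. -/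

import Mathlib

open MeasureTheory ProbabilityTheory Matrix

noncomputable section

/-- The mask `M = diag(I_n, 0)`. -/
def attnMask (n : ℕ) : Matrix (Fin (n + 1)) (Fin (n + 1)) ℝ :=
  Matrix.diagonal fun i => if i = Fin.last n then 0 else 1

/-- A linear self-attention layer with weights `P, Q`. -/
def attn (D n : ℕ) (P Q : Matrix (Fin (D + 1)) (Fin (D + 1)) ℝ)
    (Z : Matrix (Fin (D + 1)) (Fin (n + 1)) ℝ) : Matrix (Fin (D + 1)) (Fin (n + 1)) ℝ :=
  Z + (n : ℝ)⁻¹ • (P * Z * attnMask n * (Zᵀ * Q * Z))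

/-- `diag(W, 0)`: places `W` in the top-left `D × D` block. -/
def diagEmbed (D : ℕ) (W : Matrix (Fin D) (Fin D) ℝ) : Matrix (Fin (D + 1)) (Fin (D + 1)) ℝ :=
  Matrix.of fun i j =>
    if hi : (i : ℕ) < D then
      (if hj : (j : ℕ) < D then W ⟨(i : ℕ), hi⟩ ⟨(j : ℕ), hj⟩ else 0)
    else 0

/-- The bilinear feed-forward layer `bilin(Z) = Z + (diag(W₀,0)Z) ⊙ (diag(W₁,0)Z)`. -/
def bilinLayer (D n : ℕ) (W0 W1 : Matrix (Fin D) (Fin D) ℝ)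
    (Z : Matrix (Fin (D + 1)) (Fin (n + 1)) ℝ) : Matrix (Fin (D + 1)) (Fin (n + 1)) ℝ :=
  Matrix.of fun i j => Z i j + (diagEmbed D W0 * Z) i j * (diagEmbed D W1 * Z) i j

/-- Forward pass of the `2L`-layer bilinear Transformer: `TFbilinFwd … Z ℓ = Z^{(2ℓ)}`. -/
def TFbilinFwd (D n : ℕ) (W0 W1 : ℕ → Matrix (Fin D) (Fin D) ℝ)
    (P Q : ℕ → Matrix (Fin (D + 1)) (Fin (D + 1)) ℝ)
    (Z : Matrix (Fin (D + 1)) (Fin (n + 1)) ℝ) : ℕ → Matrix (Fin (D + 1)) (Fin (n + 1)) ℝ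
  | 0 => Z
  | ℓ + 1 => attn D n (P (ℓ + 1)) (Q (ℓ + 1))
      (bilinLayer D n (W0 (ℓ + 1)) (W1 (ℓ + 1)) (TFbilinFwd D n W0 W1 P Q Z ℓ))

/-- The prompt matrix: column `i ≤ n` is `((1, x_i, 0_d), y_i)`, last column
`((1, x_{n+1}, 0_d), 0)`. -/
def promptX (d D n : ℕ) (x : Fin (n + 1) → Fin d → ℝ) (y : Fin n → ℝ) :
    Matrix (Fin (D + 1)) (Fin (n + 1)) ℝ :=
  Matrix.of fun i j =>
    if h0 : (i : ℕ) = 0 then 1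
    else if h1 : (i : ℕ) ≤ d then x j ⟨(i : ℕ) - 1, by omega⟩
    else if (i : ℕ) = D then (if hj : (j : ℕ) < n then y ⟨(j : ℕ), hj⟩ else 0)
    else 0

/-- Multi-indices `α ∈ ℕ^d` of total degree `|α| ≤ p` (each entry is at most `p`, so we
record entries in `Fin (p+1)`). -/
abbrev MIdx (d p : ℕ) := { α : Fin d → Fin (p + 1) // ∑ i, (α i : ℕ) ≤ p }

/-- The degree-`p` polynomial predictor `f(x; w) = Σ_{|α| ≤ p} w_α x^α`. -/
def polyPred (d p : ℕ) (w : MIdx d p → ℝ) (x : Fin d → ℝ) : ℝ :=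
  ∑ α : MIdx d p, w α * ∏ r, x r ^ (α.1 r : ℕ)

/-- The polynomial regression loss `L(w) = (1/2n) Σᵢ (f(xᵢ; w) + yᵢ)²`. -/
def polyLoss (d p n : ℕ) (x : Fin n → Fin d → ℝ) (y : Fin n → ℝ) (w : MIdx d p → ℝ) : ℝ :=
  (2 * (n : ℝ))⁻¹ * ∑ i : Fin n, (polyPred d p w (x i) + y i) ^ 2

/-- Block-coordinate descent iterates for an objective `F`, step sizes `η^{(ℓ)}` and
blocks `b_ℓ`, starting from `w^{(0)} = 0`. -/
def bcdIter {I : Type} [Fintype I] [DecidableEq I]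
    (F : (I → ℝ) → ℝ) (η : ℕ → ℝ) (b : ℕ → Finset I) : ℕ → I → ℝ
  | 0 => 0
  | ℓ + 1 => fun α =>
      if α ∈ b (ℓ + 1) then
        bcdIter F η b ℓ α - η (ℓ + 1) * fderiv ℝ F (bcdIter F η b ℓ) (Pi.single α 1)
      else bcdIter F η b ℓ α

/-!
In function space, a step of block-coordinate descent is kernel gradient descent with kernel
`K_b(x, x') = Σ_{α ∈ b} x^α x'^α`, and an attention layer performs exactly such a step with the
dot product of the feature rows as kernel. For the rows `(1, x, (x^m x_r)_r)` this is the kernel of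
the block `{1} ∪ {x_r} ∪ {x^m x_r}`, of size at most `2d + 1`. A bilinear layer can multiply `m` by
one variable or reset it to `1`. Every sorted word of length at most `p - 1` in the `d` variables is
a prefix of one of the `C(d+p-2, p-1)` sorted words of length `p - 1`, so spelling these out one
after the other, with `p` layers each, reaches every `m` of degree less than `p`.
-/

section GradientDescent

variable {d p n : ℕ}

/-- The kernel `K_b(x, x') = Σ_{α ∈ b} x^α x'^α` of a block `b` of monomials. -/
def monomialKernel (b : Finset (MIdx d p)) (x x' : Fin d → ℝ) : ℝ :=
  ∑ α ∈ b, (∏ r, x r ^ (α.1 r : ℕ)) * ∏ r, x' r ^ (α.1 r : ℕ)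

lemma hasFDerivAt_polyPred (w : MIdx d p → ℝ) (x : Fin d → ℝ) :
    HasFDerivAt (fun w => polyPred d p w x)
      (∑ α : MIdx d p, (∏ r, x r ^ (α.1 r : ℕ)) •
        (ContinuousLinearMap.proj α : (MIdx d p → ℝ) →L[ℝ] ℝ)) w :=
  HasFDerivAt.fun_sum fun α _ => (hasFDerivAt_apply α w).mul_const _

lemma fderiv_polyLoss_single (x : Fin n → Fin d → ℝ) (y : Fin n → ℝ) (w : MIdx d p → ℝ)
    (α : MIdx d p) :
    fderiv ℝ (polyLoss d p n x y) w (Pi.single α 1) =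
      (n : ℝ)⁻¹ * ∑ i, (polyPred d p w (x i) + y i) * ∏ r, x i r ^ (α.1 r : ℕ) := by
  have hloss := (HasFDerivAt.fun_sum (u := Finset.univ) fun i _ =>
    ((hasFDerivAt_polyPred w (x i)).add_const (y i)).pow 2).const_mul (2 * (n : ℝ))⁻¹
  unfold polyLoss
  rw [hloss.fderiv]
  simp only [_root_.smul_apply, _root_.sum_apply, ContinuousLinearMap.proj_apply, Pi.single_apply,
    smul_eq_mul, mul_ite, mul_one, mul_zero, Finset.sum_ite_eq', Finset.mem_univ, if_true,
    Finset.mul_sum]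
  exact Finset.sum_congr rfl fun i _ => by ring

lemma polyPred_bcdIter_succ (x : Fin n → Fin d → ℝ) (y : Fin n → ℝ) (η : ℕ → ℝ)
    (b : ℕ → Finset (MIdx d p)) (ℓ : ℕ) (x' : Fin d → ℝ) :
    polyPred d p (bcdIter (polyLoss d p n x y) η b (ℓ + 1)) x' =
      polyPred d p (bcdIter (polyLoss d p n x y) η b ℓ) x' -
        η (ℓ + 1) * ((n : ℝ)⁻¹ * ∑ i,
          (polyPred d p (bcdIter (polyLoss d p n x y) η b ℓ) (x i) + y i) *
            monomialKernel (b (ℓ + 1)) (x i) x') := by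
  set w := bcdIter (polyLoss d p n x y) η b ℓ with hw
  have hstep (α : MIdx d p) : bcdIter (polyLoss d p n x y) η b (ℓ + 1) α =
      w α - if α ∈ b (ℓ + 1) then
        η (ℓ + 1) * fderiv ℝ (polyLoss d p n x y) w (Pi.single α 1) else 0 := by
    simp only [bcdIter, ← hw]
    split_ifs <;> simp
  rw [polyPred]
  simp only [hstep, sub_mul, Finset.sum_sub_distrib, ite_mul, zero_mul, Finset.sum_ite_mem,
    Finset.univ_inter, fderiv_polyLoss_single, monomialKernel, Finset.mul_sum, Finset.sum_mul]
  rw [Finset.sum_comm (s := b (ℓ + 1))]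
  simp only [polyPred, mul_assoc]

end GradientDescent

section Layers

variable {D n : ℕ}

/-- The token matrix whose `j`-th column is `(φ j, u j)`: a feature vector and a label. -/
def tokens (φ : Fin (n + 1) → Fin D → ℝ) (u : Fin (n + 1) → ℝ) :
    Matrix (Fin (D + 1)) (Fin (n + 1)) ℝ :=
  Matrix.of fun i j => Fin.snoc (α := fun _ => ℝ) (φ j) (u j) i

@[simp]
lemma tokens_castSucc (φ : Fin (n + 1) → Fin D → ℝ) (u : Fin (n + 1) → ℝ) (k : Fin D)
    (j : Fin (n + 1)) : tokens φ u k.castSucc j = φ j k := by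
  simp [tokens]

@[simp]
lemma tokens_last (φ : Fin (n + 1) → Fin D → ℝ) (u : Fin (n + 1) → ℝ) (j : Fin (n + 1)) :
    tokens φ u (Fin.last D) j = u j := by
  simp [tokens]

/-- The attention weight `P` that writes `-η` times the attended labels into the label row. -/
def labelWeight (D : ℕ) (η : ℝ) : Matrix (Fin (D + 1)) (Fin (D + 1)) ℝ :=
  Matrix.single (Fin.last D) (Fin.last D) (-η)

/-- The attention weight `Q` that compares tokens through the dot product of their features. -/
def featureWeight (D : ℕ) : Matrix (Fin (D + 1)) (Fin (D + 1)) ℝ :=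
  Matrix.diagonal (Fin.snoc (α := fun _ => ℝ) 1 0)

lemma labelWeight_mul_tokens_mul_attnMask (η : ℝ) (φ : Fin (n + 1) → Fin D → ℝ)
    (u : Fin (n + 1) → ℝ) :
    labelWeight D η * tokens φ u * attnMask n =
      tokens 0 (Fin.snoc (α := fun _ => ℝ) (fun m => -η * u m.castSucc) 0) := by
  ext i m
  cases i using Fin.lastCases <;> cases m using Fin.lastCases <;>
    simp [labelWeight, attnMask, Matrix.single_mul_apply_of_ne]

lemma transpose_tokens_mul_featureWeight_mul_tokens (φ : Fin (n + 1) → Fin D → ℝ)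
    (u : Fin (n + 1) → ℝ) (m j : Fin (n + 1)) :
    ((tokens φ u)ᵀ * featureWeight D * tokens φ u) m j = φ m ⬝ᵥ φ j := by
  rw [Matrix.mul_apply]
  simp [Matrix.mul_diagonal, Fin.sum_univ_castSucc, featureWeight, dotProduct]

lemma attn_tokens (η : ℝ) (φ : Fin (n + 1) → Fin D → ℝ) (u : Fin (n + 1) → ℝ) :
    attn D n (labelWeight D η) (featureWeight D) (tokens φ u) =
      tokens φ fun j => u j - η * ((n : ℝ)⁻¹ * ∑ m : Fin n, u m.castSucc *
        (φ m.castSucc ⬝ᵥ φ j)) := by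
  ext i j
  rw [attn, labelWeight_mul_tokens_mul_attnMask, Matrix.add_apply, Matrix.smul_apply,
    Matrix.mul_apply]
  simp only [transpose_tokens_mul_featureWeight_mul_tokens, Fin.sum_univ_castSucc]
  cases i using Fin.lastCases with
  | last => simp [mul_assoc, ← Finset.mul_sum, sub_eq_add_neg, mul_left_comm]
  | cast k => simp

lemma diagEmbed_mul_tokens (W : Matrix (Fin D) (Fin D) ℝ) (φ : Fin (n + 1) → Fin D → ℝ)
    (u : Fin (n + 1) → ℝ) :
    diagEmbed D W * tokens φ u = tokens (fun j => W *ᵥ φ j) 0 := by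
  ext i j
  cases i using Fin.lastCases <;>
    simp [Matrix.mul_apply, Fin.sum_univ_castSucc, diagEmbed, Matrix.mulVec, dotProduct]

lemma bilinLayer_tokens (W0 W1 : Matrix (Fin D) (Fin D) ℝ) (φ : Fin (n + 1) → Fin D → ℝ)
    (u : Fin (n + 1) → ℝ) :
    bilinLayer D n W0 W1 (tokens φ u) =
      tokens (fun j => φ j + (W0 *ᵥ φ j) * (W1 *ᵥ φ j)) u := by
  ext i j
  rw [bilinLayer, Matrix.of_apply, diagEmbed_mul_tokens, diagEmbed_mul_tokens]
  cases i using Fin.lastCases <;> simp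

lemma TFbilinFwd_tokens {d p : ℕ} (η : ℕ → ℝ) (b : ℕ → Finset (MIdx d p))
    (W0 W1 : ℕ → Matrix (Fin D) (Fin D) ℝ) (φ : ℕ → (Fin d → ℝ) → Fin D → ℝ)
    (hupdate : ∀ ℓ x, φ (ℓ + 1) x = φ ℓ x + (W0 (ℓ + 1) *ᵥ φ ℓ x) * (W1 (ℓ + 1) *ᵥ φ ℓ x))
    (hkernel : ∀ ℓ x x', φ ℓ x ⬝ᵥ φ ℓ x' = monomialKernel (b ℓ) x x')
    (x : Fin (n + 1) → Fin d → ℝ) (y : Fin n → ℝ) (ℓ : ℕ) :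
    TFbilinFwd D n W0 W1 (fun ℓ => labelWeight D (η ℓ)) (fun _ => featureWeight D)
        (tokens (fun j => φ 0 (x j)) (Fin.snoc (α := fun _ => ℝ) y 0)) ℓ =
      tokens (fun j => φ ℓ (x j)) fun j =>
        polyPred d p (bcdIter (polyLoss d p n (fun i => x i.castSucc) y) η b ℓ) (x j) +
          Fin.snoc (α := fun _ => ℝ) y 0 j := by
  induction ℓ with
  | zero => simp [TFbilinFwd, bcdIter, polyPred]
  | succ ℓ ih =>
    rw [TFbilinFwd, ih, bilinLayer_tokens]
    simp only [← hupdate, attn_tokens, hkernel, polyPred_bcdIter_succ, Fin.snoc_castSucc,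
      add_sub_right_comm]

end Layers

section Features

variable {σ R : Type*} [DecidableEq σ] [CommRing R]

/-- The values `x^m · x_r` of the scratch rows, where a multiset `m` of variables stands for the
monomial that is their product; they vanish when `m = 0`, as in the prompt. -/
def scratch (m : Multiset σ) (x : σ → R) (r : σ) : R :=
  if m = 0 then 0 else (m.map x).prod * x r

/-- The feature vector `(1, x, scratch)` of a point `x`. -/
def polyFeatures (m : Multiset σ) (x : σ → R) : Unit ⊕ σ ⊕ σ → R :=
  Sum.elim 1 (Sum.elim x (scratch m x))

variable [Fintype σ]

/-- The matrix whose scratch row `r` reads row `c r`; its other rows vanish. -/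
def scratchRead (c : σ → Unit ⊕ σ ⊕ σ) : Matrix (Unit ⊕ σ ⊕ σ) (Unit ⊕ σ ⊕ σ) R :=
  Matrix.of (Sum.elim (fun _ => 0) (Sum.elim (fun _ => 0) fun r => Pi.single (c r) 1))

lemma scratchRead_mulVec (c : σ → Unit ⊕ σ ⊕ σ) (v : Unit ⊕ σ ⊕ σ → R) :
    scratchRead c *ᵥ v = Sum.elim (fun _ => 0) (Sum.elim (fun _ => 0) (v ∘ c)) := by
  ext (_ | _ | _) <;> simp [scratchRead, Matrix.mulVec]

lemma polyFeatures_add_scratchRead_mul {m m' : Multiset σ} {x : σ → R}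
    {c : σ → Unit ⊕ σ ⊕ σ} {g : Unit ⊕ σ ⊕ σ → R}
    (h : ∀ r, scratch m' x r =
      scratch m x r + polyFeatures m x (c r) * (g ⬝ᵥ polyFeatures m x)) :
    polyFeatures m' x = polyFeatures m x +
      (scratchRead c *ᵥ polyFeatures m x) *
        (Matrix.of (fun _ : Unit ⊕ σ ⊕ σ => g) *ᵥ polyFeatures m x) := by
  rw [scratchRead_mulVec]
  ext (_ | _ | r)
  · simp [polyFeatures]
  · simp [polyFeatures]
  · exact h r

/-- A possible move of the scratch monomial in one bilinear layer: discard it, or multiply it by a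
variable. -/
def MonomialStep (m m' : Multiset σ) : Prop :=
  m' = 0 ∨ ∃ i, m' = i ::ₘ m

/-- Discarding, starting and extending the scratch monomial are the updates `s ↦ s - s · 1`,
`0 ↦ 0 + x_r · x_i` and `s ↦ s + s · (x_i - 1)`. -/
lemma MonomialStep.exists_bilinear {m m' : Multiset σ} (h : MonomialStep m m') :
    ∃ W0 W1 : Matrix (Unit ⊕ σ ⊕ σ) (Unit ⊕ σ ⊕ σ) R, ∀ x,
      polyFeatures m' x =
        polyFeatures m x + (W0 *ᵥ polyFeatures m x) * (W1 *ᵥ polyFeatures m x) := by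
  let one : Unit ⊕ σ ⊕ σ := Sum.inl ()
  let data (r : σ) : Unit ⊕ σ ⊕ σ := Sum.inr (Sum.inl r)
  let scratchRow (r : σ) : Unit ⊕ σ ⊕ σ := Sum.inr (Sum.inr r)
  rcases h with rfl | ⟨i, rfl⟩
  · refine ⟨scratchRead scratchRow, Matrix.of fun _ => -Pi.single one 1, fun x =>
      polyFeatures_add_scratchRead_mul fun r => ?_⟩
    simp [scratch, polyFeatures, one, scratchRow]
  by_cases hm : m = 0
  · refine ⟨scratchRead data, Matrix.of fun _ => Pi.single (data i) 1, fun x =>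
      polyFeatures_add_scratchRead_mul fun r => ?_⟩
    simp [hm, scratch, polyFeatures, data, mul_comm]
  · refine ⟨scratchRead scratchRow, Matrix.of fun _ => Pi.single (data i) 1 - Pi.single one 1,
      fun x => polyFeatures_add_scratchRead_mul fun r => ?_⟩
    simp only [scratch, Multiset.cons_ne_zero, ↓reduceIte, Multiset.map_cons, Multiset.prod_cons,
      hm, polyFeatures, Sum.elim_inr, sub_dotProduct, single_dotProduct, Sum.elim_inl, one_mul,
      Pi.one_apply, mul_one, scratchRow, data, one]
    ring

/-- The monomials `1`, `x_r` and `x^m · x_r` represented by the feature vector of `m`. -/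
def activeMonomials (m : Multiset σ) : Finset (Multiset σ) :=
  insert 0 (Finset.univ.image (fun r => {r}) ∪ Finset.univ.image (· ::ₘ m))

lemma card_activeMonomials_le (m : Multiset σ) :
    (activeMonomials m).card ≤ 2 * Fintype.card σ + 1 := by
  have hsingle : (Finset.univ.image fun r : σ => ({r} : Multiset σ)).card ≤ Fintype.card σ :=
    Finset.card_image_le
  have hcons : (Finset.univ.image fun r : σ => r ::ₘ m).card ≤ Fintype.card σ :=
    Finset.card_image_le
  have hunion := Finset.card_union_le (Finset.univ.image fun r : σ => ({r} : Multiset σ))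
    (Finset.univ.image (· ::ₘ m))
  have hinsert := Finset.card_insert_le (0 : Multiset σ)
    (Finset.univ.image (fun r => {r}) ∪ Finset.univ.image (· ::ₘ m))
  unfold activeMonomials
  omega

lemma card_le_of_mem_activeMonomials {m γ : Multiset σ} (h : γ ∈ activeMonomials m) :
    γ.card ≤ m.card + 1 := by
  simp only [activeMonomials, Finset.mem_insert, Finset.mem_union, Finset.mem_image,
    Finset.mem_univ, true_and] at h
  rcases h with rfl | ⟨r, rfl⟩ | ⟨r, rfl⟩ <;> simp

lemma exists_mem_activeMonomials {q : ℕ} {γ : Multiset σ} (hγ : γ.card ≤ q + 1) :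
    ∃ m : Multiset σ, m.card ≤ q ∧ γ ∈ activeMonomials m := by
  induction γ using Multiset.induction with
  | empty => exact ⟨0, Nat.zero_le q, by simp [activeMonomials]⟩
  | cons r m => exact ⟨m, by simpa using hγ, by simp [activeMonomials]⟩

lemma polyFeatures_dotProduct (m : Multiset σ) (x x' : σ → R) :
    polyFeatures m x ⬝ᵥ polyFeatures m x' =
      ∑ γ ∈ activeMonomials m, (γ.map x).prod * (γ.map x').prod := by
  have hsingle : ∑ γ ∈ Finset.univ.image (fun r : σ => ({r} : Multiset σ)),
      (γ.map x).prod * (γ.map x').prod = ∑ r, x r * x' r := by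
    rw [Finset.sum_image fun _ _ _ _ h => Multiset.singleton_inj.1 h]
    simp
  have hcons : ∑ γ ∈ Finset.univ.image (· ::ₘ m), (γ.map x).prod * (γ.map x').prod =
      ∑ r, (m.map x).prod * x r * ((m.map x').prod * x' r) := by
    rw [Finset.sum_image fun _ _ _ _ h => (Multiset.cons_inj_left m).1 h]
    exact Finset.sum_congr rfl fun r _ => by
      simp only [Multiset.map_cons, Multiset.prod_cons]
      ring
  rw [activeMonomials, Finset.sum_insert (by simp)]
  by_cases hm : m = 0
  · subst hm
    simpa [polyFeatures, scratch, dotProduct] using hsingle.symm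
  · have hdisj : Disjoint (Finset.univ.image fun r : σ => ({r} : Multiset σ))
        (Finset.univ.image (· ::ₘ m)) := by
      simp [Finset.disjoint_left, eq_comm (b := ({_} : Multiset σ)),
        Multiset.singleton_eq_cons_iff, hm]
    rw [Finset.sum_union hdisj, hsingle, hcons]
    simp [polyFeatures, scratch, hm, dotProduct]

end Features

section Blocks

variable {d p : ℕ}

/-- The multiset of variables, with multiplicity, whose product is `x^α`. -/
def MIdx.toMultiset (α : MIdx d p) : Multiset (Fin d) :=
  ∑ r, Multiset.replicate (α.1 r) r

lemma MIdx.count_toMultiset (α : MIdx d p) (r : Fin d) : α.toMultiset.count r = α.1 r := by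
  simp [MIdx.toMultiset, Multiset.count_sum', Multiset.count_replicate]

lemma MIdx.toMultiset_injective :
    Function.Injective (MIdx.toMultiset : MIdx d p → Multiset (Fin d)) := by
  intro α β h
  ext r
  rw [← α.count_toMultiset, h, β.count_toMultiset]

lemma MIdx.card_toMultiset_le (α : MIdx d p) : α.toMultiset.card ≤ p := by
  simpa [MIdx.toMultiset] using α.2

lemma MIdx.exists_toMultiset_eq {m : Multiset (Fin d)} (hm : m.card ≤ p) :
    ∃ α : MIdx d p, α.toMultiset = m := by
  have hsum : ∑ r, m.count r ≤ p := by simpa using hm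
  let α : MIdx d p :=
    ⟨fun r => ⟨m.count r, Nat.lt_succ_of_le ((m.count_le_card r).trans hm)⟩, hsum⟩
  exact ⟨α, Multiset.ext.2 α.count_toMultiset⟩

lemma MIdx.prod_map_toMultiset (α : MIdx d p) (x : Fin d → ℝ) :
    (α.toMultiset.map x).prod = ∏ r, x r ^ (α.1 r : ℕ) := by
  rw [MIdx.toMultiset, ← Multiset.coe_mapAddMonoidHom, map_sum, Multiset.prod_sum]
  simp

variable (p) in
/-- The block of multi-indices of the monomials represented by the feature vector of `m`. -/
def monomialBlock (m : Multiset (Fin d)) : Finset (MIdx d p) :=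
  Finset.univ.filter fun α => α.toMultiset ∈ activeMonomials m

lemma mem_monomialBlock {m : Multiset (Fin d)} {α : MIdx d p} :
    α ∈ monomialBlock p m ↔ α.toMultiset ∈ activeMonomials m := by
  simp [monomialBlock]

lemma card_monomialBlock_le (m : Multiset (Fin d)) :
    (monomialBlock p m).card ≤ 2 * d + 1 := by
  have hle : (monomialBlock p m).card ≤ (activeMonomials m).card :=
    Finset.card_le_card_of_injOn MIdx.toMultiset (fun _ => mem_monomialBlock.1)
      MIdx.toMultiset_injective.injOn
  simpa using hle.trans (card_activeMonomials_le m)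

lemma monomialKernel_monomialBlock {m : Multiset (Fin d)} (hm : m.card < p) (x x' : Fin d → ℝ) :
    monomialKernel (monomialBlock p m) x x' = polyFeatures m x ⬝ᵥ polyFeatures m x' := by
  rw [polyFeatures_dotProduct]
  refine Finset.sum_nbij MIdx.toMultiset (fun _ => mem_monomialBlock.1)
    MIdx.toMultiset_injective.injOn (fun γ hγ => ?_) fun α _ => ?_
  · obtain ⟨α, rfl⟩ := MIdx.exists_toMultiset_eq
      ((card_le_of_mem_activeMonomials hγ).trans (Nat.succ_le_of_lt hm))
    exact ⟨α, mem_monomialBlock.2 hγ, rfl⟩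
  · rw [α.prod_map_toMultiset, α.prod_map_toMultiset]

end Blocks

section Walks

variable {σ : Type*} [LinearOrder σ]

/-- Padding the sorted word of `m` with `⊤` keeps it sorted. -/
lemma exists_sym_take_sort_eq [OrderTop σ] {q : ℕ} {m : Multiset σ} (hm : m.card ≤ q) :
    ∃ s : Sym σ q, (((s : Multiset σ).sort.take m.card : List σ) : Multiset σ) = m := by
  let s := m + Multiset.replicate (q - m.card) ⊤
  have hs : s.card = q := by simp [s, hm]
  have hsort : s.sort = m.sort ++ List.replicate (q - m.card) ⊤ := by
    refine List.Perm.eq_of_pairwise' (r := (· ≤ ·)) (Multiset.pairwise_sort _ _) ?_ ?_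
    · simp [List.pairwise_append, List.pairwise_replicate]
    · rw [← Multiset.coe_eq_coe, ← Multiset.coe_add]
      simp [s, Multiset.coe_replicate]
  refine ⟨⟨s, hs⟩, ?_⟩
  rw [Sym.coe_mk, hsort, List.take_left' (Multiset.length_sort _), Multiset.sort_eq]

lemma exists_enumeration (ι : Type*) [Fintype ι] [Nonempty ι] :
    ∃ f : ℕ → ι, ∀ i, ∃ k < Fintype.card ι, f k = i := by
  refine ⟨Function.extend Fin.val (Fintype.equivFin ι).symm fun _ => Classical.arbitrary ι,
    fun i => ⟨Fintype.equivFin ι i, Fin.is_lt _, ?_⟩⟩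
  rw [Fin.val_injective.extend_apply, Equiv.symm_apply_apply]

/-- The walk through the prefixes of lengths `0, …, q` of the sorted words `s 0, s 1, …`. -/
def prefixWalk {q : ℕ} (s : ℕ → Sym σ q) (ℓ : ℕ) : Multiset σ :=
  ((s (ℓ / (q + 1)) : Multiset σ).sort.take (ℓ % (q + 1)) : List σ)

lemma prefixWalk_mul_add {q j : ℕ} (hj : j ≤ q) (s : ℕ → Sym σ q) (k : ℕ) :
    prefixWalk s ((q + 1) * k + j) = ((s k : Multiset σ).sort.take j : List σ) := by
  have hlt := Nat.lt_succ_of_le hj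
  rw [prefixWalk, Nat.mul_add_div q.succ_pos, Nat.mul_add_mod, Nat.div_eq_of_lt hlt,
    Nat.mod_eq_of_lt hlt, add_zero]

lemma prefixWalk_mul {q : ℕ} (s : ℕ → Sym σ q) (k : ℕ) : prefixWalk s ((q + 1) * k) = 0 := by
  simp [prefixWalk]

lemma card_prefixWalk_le {q : ℕ} (s : ℕ → Sym σ q) (ℓ : ℕ) : (prefixWalk s ℓ).card ≤ q := by
  simp [prefixWalk]

lemma monomialStep_prefixWalk {q : ℕ} (s : ℕ → Sym σ q) (ℓ : ℕ) :
    MonomialStep (prefixWalk s ℓ) (prefixWalk s (ℓ + 1)) := by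
  obtain ⟨k, j, hj, rfl⟩ : ∃ k j, j ≤ q ∧ ℓ = (q + 1) * k + j :=
    ⟨ℓ / (q + 1), ℓ % (q + 1), Nat.le_of_lt_succ (Nat.mod_lt _ q.succ_pos),
      (Nat.div_add_mod _ _).symm⟩
  rcases hj.eq_or_lt with rfl | hlt
  · left
    rw [add_assoc, ← Nat.mul_succ, prefixWalk_mul]
  · right
    have hlen : j < (s k : Multiset σ).sort.length := by simpa using hlt
    refine ⟨(s k : Multiset σ).sort[j], ?_⟩
    rw [add_assoc, prefixWalk_mul_add hlt, prefixWalk_mul_add hj,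
      List.take_succ_eq_append_getElem hlen, ← Multiset.coe_add, add_comm,
      Multiset.coe_singleton, Multiset.singleton_add]

lemma exists_monomialWalk [OrderTop σ] [Fintype σ] (q : ℕ) :
    ∃ μ : ℕ → Multiset σ, μ 0 = 0 ∧ (∀ ℓ, MonomialStep (μ ℓ) (μ (ℓ + 1))) ∧
      (∀ ℓ, (μ ℓ).card ≤ q) ∧
      ∀ m, m.card ≤ q → ∃ ℓ, 1 ≤ ℓ ∧ ℓ ≤ (q + 1) * Fintype.card (Sym σ q) ∧ μ ℓ = m := by
  have : Nonempty (Sym σ q) := ⟨Sym.replicate q ⊤⟩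
  obtain ⟨s, hs⟩ := exists_enumeration (Sym σ q)
  refine ⟨prefixWalk s, prefixWalk_mul s 0, monomialStep_prefixWalk s, card_prefixWalk_le s,
    fun m hm => ?_⟩
  rcases eq_or_ne m 0 with rfl | hm0
  · exact ⟨_, Nat.mul_pos q.succ_pos Fintype.card_pos, le_rfl, prefixWalk_mul s _⟩
  · obtain ⟨t, ht⟩ := exists_sym_take_sort_eq hm
    obtain ⟨k, hk, rfl⟩ := hs t
    have hpos := Multiset.card_pos.2 hm0
    have hblock := Nat.mul_le_mul_left (q + 1) (Nat.succ_le_of_lt hk)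
    rw [Nat.mul_succ] at hblock
    exact ⟨(q + 1) * k + m.card, by omega, by omega, by rw [prefixWalk_mul_add hm, ht]⟩

end Walks

section Embedding

variable {d n : ℕ}

/-- The order of the feature rows in the prompt: constant, data, scratch. -/
def rowEquiv (d : ℕ) : Unit ⊕ Fin d ⊕ Fin d ≃ Fin (2 * d + 1) :=
  ((Equiv.sumCongr finOneEquiv.symm finSumFinEquiv).trans finSumFinEquiv).trans
    (finCongr (by omega))

lemma val_rowEquiv_const (u : Unit) : (rowEquiv d (Sum.inl u) : ℕ) = 0 := by
  simp [rowEquiv]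

lemma val_rowEquiv_data (r : Fin d) : (rowEquiv d (Sum.inr (Sum.inl r)) : ℕ) = r + 1 := by
  simp [rowEquiv, add_comm]

lemma val_rowEquiv_scratch (r : Fin d) :
    (rowEquiv d (Sum.inr (Sum.inr r)) : ℕ) = d + r + 1 := by
  simp [rowEquiv, add_comm]

/-- The feature vector of a point as a column of the Transformer's embedding space. -/
def embeddedFeatures (m : Multiset (Fin d)) (x : Fin d → ℝ) : Fin (2 * d + 1) → ℝ :=
  polyFeatures m x ∘ (rowEquiv d).symm

lemma MonomialStep.exists_bilinear_embeddedFeatures {m m' : Multiset (Fin d)}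
    (h : MonomialStep m m') :
    ∃ W0 W1 : Matrix (Fin (2 * d + 1)) (Fin (2 * d + 1)) ℝ, ∀ x,
      embeddedFeatures m' x = embeddedFeatures m x +
        (W0 *ᵥ embeddedFeatures m x) * (W1 *ᵥ embeddedFeatures m x) := by
  obtain ⟨W0, W1, hW⟩ := h.exists_bilinear (R := ℝ)
  let e := (rowEquiv d).symm
  have hmulVec (W : Matrix (Unit ⊕ Fin d ⊕ Fin d) (Unit ⊕ Fin d ⊕ Fin d) ℝ) (v) :
      W.submatrix e e *ᵥ (v ∘ e) = (W *ᵥ v) ∘ e := by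
    simp [Matrix.submatrix_mulVec_equiv, Function.comp_assoc]
  refine ⟨W0.submatrix e e, W1.submatrix e e, fun x => ?_⟩
  rw [embeddedFeatures, hW, embeddedFeatures, hmulVec, hmulVec]
  rfl

lemma embeddedFeatures_dotProduct {p : ℕ} {m : Multiset (Fin d)} (hm : m.card < p)
    (x x' : Fin d → ℝ) :
    embeddedFeatures m x ⬝ᵥ embeddedFeatures m x' = monomialKernel (monomialBlock p m) x x' := by
  rw [monomialKernel_monomialBlock hm, embeddedFeatures, embeddedFeatures,
    comp_equiv_dotProduct_comp_equiv]

lemma promptX_eq_tokens (x : Fin (n + 1) → Fin d → ℝ) (y : Fin n → ℝ) :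
    promptX d (2 * d + 1) n x y =
      tokens (fun j => embeddedFeatures 0 (x j)) (Fin.snoc (α := fun _ => ℝ) y 0) := by
  ext i j
  cases i using Fin.lastCases with
  | last =>
    have hd : ¬ 2 * d + 1 ≤ d := by omega
    simp [promptX, hd, Fin.snoc, Fin.castLT]
  | cast k =>
    obtain ⟨row, rfl⟩ := (rowEquiv d).surjective k
    rw [tokens_castSucc, embeddedFeatures, Function.comp_apply, Equiv.symm_apply_apply]
    rcases row with u | r | r
    · simp [promptX, -Fin.val_eq_zero_iff, val_rowEquiv_const, polyFeatures]
    · have hr : (r : ℕ) + 1 ≤ d := r.is_lt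
      simp [promptX, -Fin.val_eq_zero_iff, val_rowEquiv_data, polyFeatures, hr]
    · have hr : ¬ d + r + 1 ≤ d := by omega
      have hr' : d + (r : ℕ) ≠ 2 * d := by omega
      simp [promptX, -Fin.val_eq_zero_iff, val_rowEquiv_scratch, polyFeatures, scratch, hr, hr']

end Embedding

/-- for the degree-`p` polynomial ICL task there are
`L ≤ p·C(d+p-2, p-1)` blocks `b_1, …, b_L ⊆ M_p`, each of size at most `2d+1` and
jointly covering `M_p`, and weights of a `2L`-layer bilinear Transformer with embedding
dimension `2d+1` implementing the corresponding block-coordinate descent over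
polynomial regression. -/
theorem stmt18 (d p n : ℕ) (hd : 1 ≤ d) (hp : 1 ≤ p) (hn : 1 ≤ n) (η : ℕ → ℝ) :
    ∃ L : ℕ, L ≤ p * Nat.choose (d + p - 2) (p - 1) ∧
      ∃ (b : ℕ → Finset (MIdx d p))
        (W0 W1 : ℕ → Matrix (Fin (2 * d + 1)) (Fin (2 * d + 1)) ℝ)
        (P Q : ℕ → Matrix (Fin (2 * d + 1 + 1)) (Fin (2 * d + 1 + 1)) ℝ),
        (∀ α : MIdx d p, ∃ ℓ, 1 ≤ ℓ ∧ ℓ ≤ L ∧ α ∈ b ℓ) ∧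
        (∀ ℓ, 1 ≤ ℓ → ℓ ≤ L → (b ℓ).card ≤ 2 * d + 1) ∧
        ∀ (x : Fin (n + 1) → Fin d → ℝ) (y : Fin n → ℝ) (ℓ : ℕ), 1 ≤ ℓ → ℓ ≤ L →
          TFbilinFwd (2 * d + 1) n W0 W1 P Q (promptX d (2 * d + 1) n x y) ℓ
              (Fin.last (2 * d + 1)) (Fin.last n)
            = polyPred d p
                (bcdIter (polyLoss d p n (fun i => x i.castSucc) y) η b ℓ)
                (x (Fin.last n)) := by
  obtain ⟨q, rfl⟩ := Nat.exists_eq_add_of_le' hp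
  have : NeZero d := ⟨by omega⟩
  obtain ⟨μ, hμ_zero, hμ_step, hμ_card, hμ_cover⟩ := exists_monomialWalk (σ := Fin d) q
  have hN : Fintype.card (Sym (Fin d) q) = Nat.choose (d + (q + 1) - 2) (q + 1 - 1) := by
    rw [Sym.card_sym_eq_choose, Fintype.card_fin]
    rfl
  choose W0 W1 hW using fun ℓ => (hμ_step ℓ).exists_bilinear_embeddedFeatures
  refine ⟨_, le_rfl, fun ℓ => monomialBlock (q + 1) (μ ℓ), fun ℓ => W0 (ℓ - 1),
    fun ℓ => W1 (ℓ - 1), fun ℓ => labelWeight _ (η ℓ), fun _ => featureWeight _, fun α => ?_,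
    fun ℓ _ _ => card_monomialBlock_le (μ ℓ), fun x y ℓ _ _ => ?_⟩
  · obtain ⟨m, hm, hα⟩ := exists_mem_activeMonomials α.card_toMultiset_le
    obtain ⟨ℓ, hℓ, hℓL, rfl⟩ := hμ_cover m hm
    exact ⟨ℓ, hℓ, hN ▸ hℓL, mem_monomialBlock.2 hα⟩
  · have hkernel ℓ := embeddedFeatures_dotProduct (Nat.lt_succ_of_le (hμ_card ℓ))
    rw [promptX_eq_tokens, ← hμ_zero,
      TFbilinFwd_tokens η _ _ _ (fun ℓ => embeddedFeatures (μ ℓ)) hW hkernel]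
    simp
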